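/- arXiv:1509.01492 — 3 statements merged into one kernel-verified Lean document; each statement's English description precedes it below -/
import Mathlib

section
/- In the differential algebra Ω, the element x³ is central: x³ commutes with each of the generators x⁻¹, y, θ, dx, dy, dθ (and hence with every element of Ω). -/
/-!
`Ω`: the differential algebra of the Z₃-graded quantum superspace, the unital
associative ℂ-algebra with generators `x`, `x⁻¹`, `y`, `θ`, `dx`, `dy`, `dθ`,
quotient of the free algebra by the two-sided ideal generated by the relations
`x·x⁻¹ = 1 = x⁻¹·x`;  `xy = q·yx`, `xθ = q·θx`, `yθ = q²·θy`, `y³ = 0`, `θ³ = 0`;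
`x·dx = q·dx·x`, `x·dy = q²·dy·x`, `x·dθ = q·dθ·x + (q−1)·dx·θ`, `y·dy = dy·y`,
`y·dx = q·dx·y + (1−q²)·dy·x`, `y·dθ = q·dθ·y + (1−q²)·dy·θ`, `θ·dx = q·dx·θ`,
`θ·dy = dy·θ`, `θ·dθ = q²·dθ·θ`;  `dx·dy = q²·dy·dx`, `dx·dθ = dθ·dx`,
`dy·dθ = dθ·dy`;  `(dx)³ = 0`, `(dy)³ = 0`.
-/

noncomputable section

inductive Gen : Type
  | x | xinv | y | th | dx | dy | dth

abbrev FA : Type := FreeAlgebra ℂ Gen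

def Xf : FA := FreeAlgebra.ι ℂ Gen.x
def XIf : FA := FreeAlgebra.ι ℂ Gen.xinv
def Yf : FA := FreeAlgebra.ι ℂ Gen.y
def Tf : FA := FreeAlgebra.ι ℂ Gen.th
def DXf : FA := FreeAlgebra.ι ℂ Gen.dx
def DYf : FA := FreeAlgebra.ι ℂ Gen.dy
def DTf : FA := FreeAlgebra.ι ℂ Gen.dth

/-- The defining relations of the differential algebra `Ω`. -/
inductive QRel (q : ℂ) : FA → FA → Prop
  | xxi : QRel q (Xf * XIf) 1
  | xix : QRel q (XIf * Xf) 1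
  | xy : QRel q (Xf * Yf) (q • (Yf * Xf))
  | xth : QRel q (Xf * Tf) (q • (Tf * Xf))
  | yth : QRel q (Yf * Tf) ((q ^ 2) • (Tf * Yf))
  | ycube : QRel q (Yf ^ 3) 0
  | thcube : QRel q (Tf ^ 3) 0
  | xdx : QRel q (Xf * DXf) (q • (DXf * Xf))
  | xdy : QRel q (Xf * DYf) ((q ^ 2) • (DYf * Xf))
  | xdth : QRel q (Xf * DTf) (q • (DTf * Xf) + (q - 1) • (DXf * Tf))
  | ydy : QRel q (Yf * DYf) (DYf * Yf)
  | ydx : QRel q (Yf * DXf) (q • (DXf * Yf) + (1 - q ^ 2) • (DYf * Xf))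
  | ydth : QRel q (Yf * DTf) (q • (DTf * Yf) + (1 - q ^ 2) • (DYf * Tf))
  | thdx : QRel q (Tf * DXf) (q • (DXf * Tf))
  | thdy : QRel q (Tf * DYf) (DYf * Tf)
  | thdth : QRel q (Tf * DTf) ((q ^ 2) • (DTf * Tf))
  | dxdy : QRel q (DXf * DYf) ((q ^ 2) • (DYf * DXf))
  | dxdth : QRel q (DXf * DTf) (DTf * DXf)
  | dydth : QRel q (DYf * DTf) (DTf * DYf)
  | dxcube : QRel q (DXf ^ 3) 0
  | dycube : QRel q (DYf ^ 3) 0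

/-- The differential algebra `Ω` of the Z₃-graded quantum superspace. -/
abbrev Om (q : ℂ) : Type := RingQuot (QRel q)

def Xg (q : ℂ) : Om q := RingQuot.mkAlgHom ℂ (QRel q) Xf
def XIg (q : ℂ) : Om q := RingQuot.mkAlgHom ℂ (QRel q) XIf
def Yg (q : ℂ) : Om q := RingQuot.mkAlgHom ℂ (QRel q) Yf
def Tg (q : ℂ) : Om q := RingQuot.mkAlgHom ℂ (QRel q) Tf
def DXg (q : ℂ) : Om q := RingQuot.mkAlgHom ℂ (QRel q) DXf
def DYg (q : ℂ) : Om q := RingQuot.mkAlgHom ℂ (QRel q) DYf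
def DTg (q : ℂ) : Om q := RingQuot.mkAlgHom ℂ (QRel q) DTf

/-- An element `a` that satisfies `x * a = c • (a * x)` with `c ^ 3 = 1` commutes with `x ^ 3`. -/
theorem commute_cube_of_mul_eq_smul {A : Type*} [Ring A] [Algebra ℂ A] {c : ℂ} {x a : A}
    (hc : c ^ 3 = 1) (h : x * a = c • (a * x)) : Commute (x ^ 3) a := by
  have h₂ : x * (x * a) = c ^ 2 • (a * x * x) := by
    rw [h, mul_smul_comm, ← mul_assoc, h, smul_mul_assoc, smul_smul, sq]
  calc x ^ 3 * a = x * (x * (x * a)) := by noncomm_ring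
    _ = c ^ 3 • (a * x * x * x) := by
      rw [h₂, mul_smul_comm, ← mul_assoc, ← mul_assoc, h, smul_mul_assoc, smul_mul_assoc,
        smul_smul, ← pow_succ]
    _ = a * x ^ 3 := by rw [hc, one_smul]; noncomm_ring

/-- If `x * a = q • (a * x) + r • e` and `x * e = q ^ 2 • (e * x)`, where `q` is a primitive cube
root of unity, then `a` commutes with `x ^ 3`. -/
theorem commute_cube_of_mul_eq_smul_add {A : Type*} [Ring A] [Algebra ℂ A] {q r : ℂ} {x a e : A}
    (hq3 : q ^ 3 = 1) (hq : q ^ 2 + q + 1 = 0) (ha : x * a = q • (a * x) + r • e)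
    (he : x * e = q ^ 2 • (e * x)) : Commute (x ^ 3) a := by
  have ha' (b : A) : x * (a * b) = q • (a * (x * b)) + r • (e * b) := by
    rw [← mul_assoc, ha, add_mul, smul_mul_assoc, smul_mul_assoc, mul_assoc]
  have he' (b : A) : x * (e * b) = q ^ 2 • (e * (x * b)) := by
    rw [← mul_assoc, he, smul_mul_assoc, mul_assoc]
  have hsum : q * (q * r) + q * (r * q ^ 2) + r * (q ^ 2 * q ^ 2) = 0 := by
    linear_combination r * q ^ 2 * hq
  calc x ^ 3 * a = x * (x * (x * a)) := by noncomm_ring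
    _ = q ^ 3 • (a * (x * (x * x))) +
        (q * (q * r) + q * (r * q ^ 2) + r * (q ^ 2 * q ^ 2)) • (e * (x * x)) := by
      simp only [ha, he, ha', he', mul_add, mul_smul_comm]
      module
    _ = a * x ^ 3 := by rw [hsum, hq3, one_smul, zero_smul, add_zero]; noncomm_ring

/-- An element commuting with the images of all generators of a quotient of a free algebra is
central. -/
theorem commute_of_commute_generators {R X : Type*} [CommRing R]
    {r : FreeAlgebra R X → FreeAlgebra R X → Prop} {z : RingQuot r}
    (h : ∀ i, Commute z (RingQuot.mkAlgHom R r (FreeAlgebra.ι R i))) (a : RingQuot r) :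
    Commute z a := by
  obtain ⟨b, rfl⟩ := RingQuot.mkAlgHom_surjective R r a
  induction b using FreeAlgebra.induction with
  | grade0 c => rw [AlgHom.commutes]; exact (Algebra.commutes c z).symm
  | grade1 i => exact h i
  | mul b c hb hc => rw [map_mul]; exact hb.mul_right hc
  | add b c hb hc => rw [map_add]; exact hb.add_right hc

/-- In the differential algebra `Ω`, the element `x³` is central: it commutes
with each of the generators `x⁻¹`, `y`, `θ`, `dx`, `dy`, `dθ` (and hence with
every element of `Ω`). -/
theorem x_cubed_central_in_Omega (q : ℂ) (hq3 : q ^ 3 = 1) (hq1 : q ≠ 1) :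
    (Xg q) ^ 3 * XIg q = XIg q * (Xg q) ^ 3 ∧
    (Xg q) ^ 3 * Yg q = Yg q * (Xg q) ^ 3 ∧
    (Xg q) ^ 3 * Tg q = Tg q * (Xg q) ^ 3 ∧
    (Xg q) ^ 3 * DXg q = DXg q * (Xg q) ^ 3 ∧
    (Xg q) ^ 3 * DYg q = DYg q * (Xg q) ^ 3 ∧
    (Xg q) ^ 3 * DTg q = DTg q * (Xg q) ^ 3 ∧
    (∀ a : Om q, (Xg q) ^ 3 * a = a * (Xg q) ^ 3) := by
  have hq : q ^ 2 + q + 1 = 0 :=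
    mul_left_cancel₀ (sub_ne_zero.mpr hq1) (by linear_combination hq3)
  have hq6 : (q ^ 2) ^ 3 = 1 := by rw [← pow_mul, mul_comm, pow_mul, hq3, one_pow]
  have hxxi : Xg q * XIg q = 1 := by
    simpa [Xg, XIg] using RingQuot.mkAlgHom_rel ℂ (QRel.xxi (q := q))
  have hxix : XIg q * Xg q = 1 := by
    simpa [Xg, XIg] using RingQuot.mkAlgHom_rel ℂ (QRel.xix (q := q))
  have hxy : Xg q * Yg q = q • (Yg q * Xg q) := by
    simpa [Xg, Yg] using RingQuot.mkAlgHom_rel ℂ (QRel.xy (q := q))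
  have hxth : Xg q * Tg q = q • (Tg q * Xg q) := by
    simpa [Xg, Tg] using RingQuot.mkAlgHom_rel ℂ (QRel.xth (q := q))
  have hxdx : Xg q * DXg q = q • (DXg q * Xg q) := by
    simpa [Xg, DXg] using RingQuot.mkAlgHom_rel ℂ (QRel.xdx (q := q))
  have hxdy : Xg q * DYg q = q ^ 2 • (DYg q * Xg q) := by
    simpa [Xg, DYg] using RingQuot.mkAlgHom_rel ℂ (QRel.xdy (q := q))
  have hxdth : Xg q * DTg q = q • (DTg q * Xg q) + (q - 1) • (DXg q * Tg q) := by
    simpa only [Xg, DTg, DXg, Tg, map_mul, map_add, map_smul] using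
      RingQuot.mkAlgHom_rel ℂ (QRel.xdth (q := q))
  have hxe : Xg q * (DXg q * Tg q) = q ^ 2 • (DXg q * Tg q * Xg q) := by
    rw [← mul_assoc, hxdx, smul_mul_assoc, mul_assoc, hxth, mul_smul_comm, smul_smul, sq,
      mul_assoc]
  have cxi : Commute (Xg q ^ 3) (XIg q) :=
    Commute.pow_left (show Commute (Xg q) (XIg q) from hxxi.trans hxix.symm) 3
  have cy := commute_cube_of_mul_eq_smul hq3 hxy
  have cth := commute_cube_of_mul_eq_smul hq3 hxth
  have cdx := commute_cube_of_mul_eq_smul hq3 hxdx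
  have cdy := commute_cube_of_mul_eq_smul hq6 hxdy
  have cdth := commute_cube_of_mul_eq_smul_add hq3 hq hxdth hxe
  refine ⟨cxi, cy, cth, cdx, cdy, cdth, commute_of_commute_generators fun i => ?_⟩
  cases i
  exacts [Commute.pow_self (Xg q) 3, cxi, cy, cth, cdx, cdy, cdth]
end
end

section
/- In the differential algebra Ω, define the Cartan–Maurer 1-forms w_x = x⁻¹·dx, w_y = x⁻¹·dy, and w_θ = x·dθ − θ·dx. Then the following nine commutation relations hold in Ω: x·w_x = q w_x·x, x·w_y = q² w_y·x, x·w_θ = q w_θ·x, y·w_x = q² w_x·y + (q−1) w_y·x, y·w_y = q w_y·y, y·w_θ = w_θ·y, θ·w_x = q² w_x·θ, θ·w_y = q w_y·θ, θ·w_θ = q w_θ·θ. -/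
/-!
`Ω`: the differential algebra of the Z₃-graded quantum superspace, the unital
associative ℂ-algebra with generators `x`, `x⁻¹`, `y`, `θ`, `dx`, `dy`, `dθ`,
quotient of the free algebra by the two-sided ideal generated by the relations
`x·x⁻¹ = 1 = x⁻¹·x`;  `xy = q·yx`, `xθ = q·θx`, `yθ = q²·θy`, `y³ = 0`, `θ³ = 0`;
`x·dx = q·dx·x`, `x·dy = q²·dy·x`, `x·dθ = q·dθ·x + (q−1)·dx·θ`, `y·dy = dy·y`,
`y·dx = q·dx·y + (1−q²)·dy·x`, `y·dθ = q·dθ·y + (1−q²)·dy·θ`, `θ·dx = q·dx·θ`,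
`θ·dy = dy·θ`, `θ·dθ = q²·dθ·θ`;  `dx·dy = q²·dy·dx`, `dx·dθ = dθ·dx`,
`dy·dθ = dθ·dy`;  `(dx)³ = 0`, `(dy)³ = 0`.
-/

noncomputable section

/-- A skew commutation relation with an invertible element passes to its inverse. -/
theorem inv_mul_eq_smul_mul_inv {K A : Type*} [CommSemiring K] [Semiring A] [Algebra K A]
    {u v a : A} {c d : K} (huv : u * v = 1) (hvu : v * u = 1) (hdc : d * c = 1)
    (h : u * a = c • (a * u)) : v * a = d • (a * v) := by
  have hau : a * u = d • (u * a) := by rw [h, smul_smul, hdc, one_smul]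
  calc v * a = v * (a * u) * v := by rw [mul_assoc, mul_assoc, huv, mul_one]
    _ = d • (a * v) := by
      rw [hau, mul_smul_comm, ← mul_assoc, hvu, one_mul, smul_mul_assoc]

/-- The commutation relations of the Cartan–Maurer 1-forms
`w_x = x⁻¹·dx`, `w_y = x⁻¹·dy`, `w_θ = x·dθ − θ·dx` with the generators of the
algebra: `x·w_x = q·w_x·x`, `x·w_y = q²·w_y·x`, `x·w_θ = q·w_θ·x`,
`y·w_x = q²·w_x·y + (q−1)·w_y·x`, `y·w_y = q·w_y·y`, `y·w_θ = w_θ·y`,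
`θ·w_x = q²·w_x·θ`, `θ·w_y = q·w_y·θ`, `θ·w_θ = q·w_θ·θ`. -/
theorem cartan_maurer_coordinate_relations (q : ℂ) (hq3 : q ^ 3 = 1) (hq1 : q ≠ 1)
    (wx wy wth : Om q)
    (hwx : wx = XIg q * DXg q)
    (hwy : wy = XIg q * DYg q)
    (hwth : wth = Xg q * DTg q - Tg q * DXg q) :
    Xg q * wx = q • (wx * Xg q) ∧
    Xg q * wy = (q ^ 2) • (wy * Xg q) ∧
    Xg q * wth = q • (wth * Xg q) ∧
    Yg q * wx = (q ^ 2) • (wx * Yg q) + (q - 1) • (wy * Xg q) ∧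
    Yg q * wy = q • (wy * Yg q) ∧
    Yg q * wth = wth * Yg q ∧
    Tg q * wx = (q ^ 2) • (wx * Tg q) ∧
    Tg q * wy = q • (wy * Tg q) ∧
    Tg q * wth = q • (wth * Tg q) := by
  subst hwx hwy hwth
  have toOm {a b : FA} (h : QRel q a b) := RingQuot.mkAlgHom_rel ℂ h
  have xxi : Xg q * XIg q = 1 := by simpa [Xg, XIg] using toOm .xxi
  have xix : XIg q * Xg q = 1 := by simpa [XIg, Xg] using toOm .xix
  have xy : Xg q * Yg q = q • (Yg q * Xg q) := by simpa [Xg, Yg] using toOm .xy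
  have xth : Xg q * Tg q = q • (Tg q * Xg q) := by simpa [Xg, Tg] using toOm .xth
  have yth : Yg q * Tg q = q ^ 2 • (Tg q * Yg q) := by simpa [Yg, Tg] using toOm .yth
  have xdx : Xg q * DXg q = q • (DXg q * Xg q) := by simpa [Xg, DXg] using toOm .xdx
  have xdy : Xg q * DYg q = q ^ 2 • (DYg q * Xg q) := by simpa [Xg, DYg] using toOm .xdy
  have xdth : Xg q * DTg q = q • (DTg q * Xg q) + (q - 1) • (DXg q * Tg q) := by
    simpa [Xg, DTg, DXg, Tg] using toOm .xdth
  have ydy : Yg q * DYg q = DYg q * Yg q := by simpa [Yg, DYg] using toOm .ydy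
  have ydx : Yg q * DXg q = q • (DXg q * Yg q) + (1 - q ^ 2) • (DYg q * Xg q) := by
    simpa [Yg, DXg, DYg, Xg] using toOm .ydx
  have ydth : Yg q * DTg q = q • (DTg q * Yg q) + (1 - q ^ 2) • (DYg q * Tg q) := by
    simpa [Yg, DTg, DYg, Tg] using toOm .ydth
  have thdx : Tg q * DXg q = q • (DXg q * Tg q) := by simpa [Tg, DXg] using toOm .thdx
  have thdy : Tg q * DYg q = DYg q * Tg q := by simpa [Tg, DYg] using toOm .thdy
  have thdth : Tg q * DTg q = q ^ 2 • (DTg q * Tg q) := by simpa [Tg, DTg] using toOm .thdth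
  have hq_sq_mul : q ^ 2 * q = 1 := by rw [← hq3]; ring
  have hq_mul_sq : q * q ^ 2 = 1 := by rw [← hq3]; ring
  have xiy := inv_mul_eq_smul_mul_inv xxi xix hq_sq_mul xy
  have xith := inv_mul_eq_smul_mul_inv xxi xix hq_sq_mul xth
  have xidx := inv_mul_eq_smul_mul_inv xxi xix hq_sq_mul xdx
  have xidy := inv_mul_eq_smul_mul_inv xxi xix hq_mul_sq xdy
  -- Every product is rewritten with the differentials to the left of the coordinates.
  have assoc {a b c : Om q} (h : a * b = c) (z : Om q) : a * (b * z) = c * z := by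
    rw [← mul_assoc, h]
  refine ⟨?_, ?_, ?_, ?_, ?_, ?_, ?_, ?_, ?_⟩ <;>
    simp only [mul_sub, sub_mul, mul_add, add_mul, mul_assoc, smul_mul_assoc, mul_smul_comm,
      xxi, xix, xy, xth, yth, xdth, thdx, xiy, xith, xidx, xidy, assoc xdx, assoc xdy,
      assoc xdth, assoc ydy, assoc ydx, assoc ydth, assoc thdx, assoc thdy, assoc thdth,
      mul_one] <;>
    match_scalars <;> grind
end
end

section
/- In the differential algebra Ω, the Cartan–Maurer 1-forms w_x = x⁻¹·dx, w_y = x⁻¹·dy, w_θ = x·dθ − θ·dx satisfy the commutation rules: w_x·w_y = q w_y·w_x, w_y·w_θ = w_θ·w_y, w_θ·w_x = q² w_x·w_θ, and moreover (w_x)³ = 0 and (w_y)³ = 0. -/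
/-!
`Ω`: the differential algebra of the Z₃-graded quantum superspace, the unital
associative ℂ-algebra with generators `x`, `x⁻¹`, `y`, `θ`, `dx`, `dy`, `dθ`,
quotient of the free algebra by the two-sided ideal generated by the relations
`x·x⁻¹ = 1 = x⁻¹·x`;  `xy = q·yx`, `xθ = q·θx`, `yθ = q²·θy`, `y³ = 0`, `θ³ = 0`;
`x·dx = q·dx·x`, `x·dy = q²·dy·x`, `x·dθ = q·dθ·x + (q−1)·dx·θ`, `y·dy = dy·y`,
`y·dx = q·dx·y + (1−q²)·dy·x`, `y·dθ = q·dθ·y + (1−q²)·dy·θ`, `θ·dx = q·dx·θ`,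
`θ·dy = dy·θ`, `θ·dθ = q²·dθ·θ`;  `dx·dy = q²·dy·dx`, `dx·dθ = dθ·dx`,
`dy·dθ = dθ·dy`;  `(dx)³ = 0`, `(dy)³ = 0`.
-/

noncomputable section

section QCommutation

variable {R A : Type*} [CommRing R] [Ring A] [Algebra R A]

/-- Commuting past an inverse: if `x * a = c • (a * x)` and `x` is inverted by `u`, then
`a * u = c • (u * a)`. -/
theorem mul_inv_eq_smul_of_mul_eq_smul {c : R} {x u a : A} (hxu : x * u = 1) (hux : u * x = 1)
    (h : x * a = c • (a * x)) : a * u = c • (u * a) := by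
  calc a * u = u * (x * a) * u := by rw [← mul_assoc, hux, one_mul]
    _ = c • (u * a * (x * u)) := by
      rw [h]; simp only [mul_smul_comm, smul_mul_assoc, mul_assoc]
    _ = c • (u * a) := by rw [hxu, mul_one]

/-- Inverting a `q`-commutation relation whose coefficient `d` has inverse `c`. -/
theorem mul_eq_smul_of_mul_eq_smul {c d : R} {a b : A} (hcd : c * d = 1)
    (h : a * b = d • (b * a)) : b * a = c • (a * b) := by
  rw [h, smul_smul, hcd, one_smul]

/-- A nilpotent element of order three stays so after multiplication by a `c`-commuting factor. -/
theorem mul_pow_three_eq_zero {c : R} {u a : A} (h : a * u = c • (u * a)) (ha : a ^ 3 = 0) :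
    (u * a) ^ 3 = 0 := by
  have h' (z : A) : a * (u * z) = c • (u * (a * z)) := by
    rw [← mul_assoc, h, smul_mul_assoc, mul_assoc]
  have ha' : a * (a * a) = 0 := by rw [← ha]; noncomm_ring
  simp only [pow_succ, pow_zero, one_mul, mul_assoc, h', smul_mul_assoc, mul_smul_comm, ha',
    mul_zero, smul_zero]

end QCommutation

/-- The Cartan–Maurer 1-forms `w_x = x⁻¹·dx`, `w_y = x⁻¹·dy`,
`w_θ = x·dθ − θ·dx` satisfy `w_x·w_y = q·w_y·w_x`, `w_y·w_θ = w_θ·w_y`,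
`w_θ·w_x = q²·w_x·w_θ`, and `(w_x)³ = 0`, `(w_y)³ = 0`. -/
theorem cartan_maurer_form_relations (q : ℂ) (hq3 : q ^ 3 = 1) (hq1 : q ≠ 1)
    (wx wy wth : Om q)
    (hwx : wx = XIg q * DXg q)
    (hwy : wy = XIg q * DYg q)
    (hwth : wth = Xg q * DTg q - Tg q * DXg q) :
    wx * wy = q • (wy * wx) ∧
    wy * wth = wth * wy ∧
    wth * wx = (q ^ 2) • (wx * wth) ∧
    wx ^ 3 = 0 ∧
    wy ^ 3 = 0 := by
  have rel {a b : FA} (h : QRel q a b) := RingQuot.mkAlgHom_rel ℂ h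
  have hxu : Xg q * XIg q = 1 := by simpa [Xg, XIg] using rel .xxi
  have hux : XIg q * Xg q = 1 := by simpa [XIg, Xg] using rel .xix
  have hxt : Xg q * Tg q = q • (Tg q * Xg q) := by simpa [Xg, Tg] using rel .xth
  have hxdx : Xg q * DXg q = q • (DXg q * Xg q) := by simpa [Xg, DXg] using rel .xdx
  have hxdy : Xg q * DYg q = q ^ 2 • (DYg q * Xg q) := by simpa [Xg, DYg] using rel .xdy
  have hxdt : Xg q * DTg q = q • (DTg q * Xg q) + (q - 1) • (DXg q * Tg q) := by
    simpa only [map_mul, map_add, map_smul, Xg, DTg, DXg, Tg] using rel .xdth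
  have htdx : Tg q * DXg q = q • (DXg q * Tg q) := by simpa [Tg, DXg] using rel .thdx
  have htdy : Tg q * DYg q = DYg q * Tg q := by simpa [Tg, DYg] using rel .thdy
  have hdxdy : DXg q * DYg q = q ^ 2 • (DYg q * DXg q) := by simpa [DXg, DYg] using rel .dxdy
  have hdxdt : DXg q * DTg q = DTg q * DXg q := by simpa [DXg, DTg] using rel .dxdth
  have hdydt : DYg q * DTg q = DTg q * DYg q := by simpa [DYg, DTg] using rel .dydth
  have hdx3 : DXg q ^ 3 = 0 := by simpa [DXg] using rel .dxcube
  have hdy3 : DYg q ^ 3 = 0 := by simpa [DYg] using rel .dycube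
  have hwth' : wth = q • (DTg q * Xg q) - DXg q * Tg q := by
    rw [hwth, hxdt, htdx]; module
  generalize Xg q = x, XIg q = u, Tg q = t, DXg q = dx, DYg q = dy, DTg q = dt at *
  have htu := mul_inv_eq_smul_of_mul_eq_smul hxu hux hxt
  have hdxu := mul_inv_eq_smul_of_mul_eq_smul hxu hux hxdx
  have hdyu := mul_inv_eq_smul_of_mul_eq_smul hxu hux hxdy
  have hdxx : dx * x = q ^ 2 • (x * dx) :=
    mul_eq_smul_of_mul_eq_smul (by rw [← hq3]; ring) hxdx
  have hdyx : dy * x = q • (x * dy) :=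
    mul_eq_smul_of_mul_eq_smul (by rw [← hq3]; ring) hxdy
  have left {a b : Om q} {c : ℂ} {d : Om q} (h : a * b = c • d) (z : Om q) :
      a * (b * z) = c • (d * z) := by rw [← mul_assoc, h, smul_mul_assoc]
  have hq4 : q ^ 4 = q := by rw [pow_succ, hq3, one_mul]
  have hux' (z : Om q) : u * (x * z) = z := by rw [← mul_assoc, hux, one_mul]
  have hxu' (z : Om q) : x * (u * z) = z := by rw [← mul_assoc, hxu, one_mul]
  refine ⟨?_, ?_, ?_, hwx ▸ mul_pow_three_eq_zero hdxu hdx3, hwy ▸ mul_pow_three_eq_zero hdyu hdy3⟩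
  · simp only [hwx, hwy, mul_assoc, left hdxu, left hdyu, hdxdy, mul_smul_comm, smul_smul]
  · have hl : wy * wth = q • (dt * dy) - q • (u * (dy * (dx * t))) := by
      simp only [hwy, hwth, mul_sub, mul_assoc, left hdyx, hux', htdx, hdydt, mul_smul_comm]
    have hr : wth * wy = q • (dt * dy) - q ^ 4 • (u * (dy * (dx * t))) := by
      simp only [hwy, hwth', sub_mul, smul_mul_assoc, mul_assoc, hxu', left htu, left hdxu, htdy,
        left hdxdy, mul_smul_comm, smul_smul]
      congr 2; ring
    rw [hl, hr, hq4]
  · have hl : wth * wx = q • (dt * dx) - q ^ 3 • (u * (dx * (dx * t))) := by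
      simp only [hwx, hwth', sub_mul, smul_mul_assoc, mul_assoc, hxu', left htu, left hdxu, htdx,
        mul_smul_comm, smul_smul]
      congr 2; ring
    have hr : wx * wth = q ^ 2 • (dt * dx) - q • (u * (dx * (dx * t))) := by
      simp only [hwx, hwth, mul_sub, mul_assoc, left hdxx, hux', htdx, hdxdt, mul_smul_comm]
    rw [hl, hr, smul_sub, smul_smul, smul_smul, ← pow_add, ← pow_succ, hq4]
end
end
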